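/- arXiv:2208.13871 — 4 statements merged into one kernel-verified Lean document; each statement's English description precedes it below -/
import Mathlib

section
/- Let X and Z be random elements and V = (V_i)_{i ∈ I} a finite family of random variables, and define the collection of Markov blankets of V for X given Z by 𝔯_{X|Z}(V) = {J ⊆ I : X ⊥⊥ V_{I∖J} | (Z, V_J)}. If the joint law of (Z, (V_i)_{i ∈ I}) is absolutely continuous with respect to the product P_Z ⊗ ⨂_{i ∈ I} P_{V_i} of its one-dimensional marginal laws with a density that is positive almost everywhere, then 𝔯_{X|Z}(V) is closed under intersection: J_1, J_2 ∈ 𝔯_{X|Z}(V) implies J_1 ∩ J_2 ∈ 𝔯_{X|Z}(V). -/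
/-!
Fix an event `{X ∈ s}` and let `g_J(z, v_J)` be its conditional probability given
`(Z, V_J) = (z, v_J)`. If `J` is a blanket, then `g_J(Z, V_J)` is also the conditional probability
of `{X ∈ s}` given the whole of `(Z, V)` (`condExp_eq_of_blanket`). For two blankets this gives
`g_{J₁}(Z, V_{J₁}) = g_{J₂}(Z, V_{J₂})` almost surely, and positivity of the density transfers
this equality to almost every point of the product law `P_Z ⊗ ⨂ P_{V_i}`.

Under the product law, coordinates may be replaced by an independent copy `w` of `v`. Replacing
first the coordinates off `J₁`, which `g_{J₁}` ignores, and then passing to `g_{J₂}`, which ignores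
the remaining coordinates off `J₂`, shows that `g_{J₁}(z, v)` is a.e. unchanged when all
coordinates off `J₁ ∩ J₂` are replaced by those of `w`. By Fubini one fixed `w` works
(`exists_ae_eq_freeze`), so the conditional probability of `{X ∈ s}` given `(Z, V)` has a version
measurable with respect to `(Z, V_{J₁ ∩ J₂})`. By the tower property this yields the conditional
independence (`condIndepFun_of_condExp`).
-/

open MeasureTheory ProbabilityTheory

/-- `X ⊥⊥ Y | W` under `μ`: conditional independence of the random elements `X` and `Y`
given the σ-algebra generated by the random element `W`. -/
def CondIndepGiven {Ω α β γ : Type*} [mΩ : MeasurableSpace Ω] [StandardBorelSpace Ω]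
    [MeasurableSpace α] [MeasurableSpace β] [MeasurableSpace γ]
    (μ : Measure Ω) [IsFiniteMeasure μ]
    (X : Ω → α) (Y : Ω → β) (W : Ω → γ) : Prop :=
  ∃ hle : MeasurableSpace.comap W inferInstance ≤ mΩ,
    CondIndepFun (MeasurableSpace.comap W inferInstance) hle X Y μ

/-- The subvector `(V_i)_{i ∈ J}` of a family of random variables. -/
def subvec {Ω I : Type*} (V : I → Ω → ℝ) (J : Set I) : Ω → (J → ℝ) :=
  fun ω j => V j ω

/-- The joint law of `(V_i)_{i ∈ I}` is absolutely continuous w.r.t. the product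
`⨂_{i ∈ I} P_{V_i}` of its one-dimensional marginal laws, with a density that is positive
almost everywhere. -/
def PositiveFamilyDensity {Ω I : Type*} [MeasurableSpace Ω] [Fintype I]
    (μ : Measure Ω) (V : I → Ω → ℝ) : Prop :=
  μ.map (fun ω i => V i ω) ≪ Measure.pi (fun i => μ.map (V i)) ∧
    ∀ᵐ x ∂(Measure.pi fun i => μ.map (V i)),
      0 < (μ.map (fun ω i => V i ω)).rnDeriv (Measure.pi fun i => μ.map (V i)) x

/-- The joint law of `(W, (V_i)_{i ∈ I})` is absolutely continuous w.r.t. the product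
`P_W ⊗ ⨂_{i ∈ I} P_{V_i}` of its one-dimensional marginal laws, with a density that is
positive almost everywhere. -/
def PositivePairDensity {Ω α I : Type*} [MeasurableSpace Ω] [MeasurableSpace α] [Fintype I]
    (μ : Measure Ω) (W : Ω → α) (V : I → Ω → ℝ) : Prop :=
  μ.map (fun ω => (W ω, fun i => V i ω)) ≪ (μ.map W).prod (Measure.pi fun i => μ.map (V i)) ∧
    ∀ᵐ x ∂((μ.map W).prod (Measure.pi fun i => μ.map (V i))),
      0 < (μ.map (fun ω => (W ω, fun i => V i ω))).rnDeriv
            ((μ.map W).prod (Measure.pi fun i => μ.map (V i))) x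

/-- The joint law of `(W, U, (V_i)_{i ∈ I})` is absolutely continuous w.r.t. the product
`P_W ⊗ P_U ⊗ ⨂_{i ∈ I} P_{V_i}` of its one-dimensional marginal laws, with a density that is
positive almost everywhere. -/
def PositiveTripleDensity {Ω I : Type*} [MeasurableSpace Ω] [Fintype I]
    (μ : Measure Ω) (W U : Ω → ℝ) (V : I → Ω → ℝ) : Prop :=
  μ.map (fun ω => (W ω, U ω, fun i => V i ω)) ≪
      (μ.map W).prod ((μ.map U).prod (Measure.pi fun i => μ.map (V i))) ∧
    ∀ᵐ x ∂((μ.map W).prod ((μ.map U).prod (Measure.pi fun i => μ.map (V i)))),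
      0 < (μ.map (fun ω => (W ω, U ω, fun i => V i ω))).rnDeriv
            ((μ.map W).prod ((μ.map U).prod (Measure.pi fun i => μ.map (V i)))) x

/-- `J ∈ 𝔯_A(V)`: `J` is a treatment Markov blanket of the family `V`,
i.e. `A ⊥⊥ V_{I∖J} | V_J`. -/
def IsTreatBlanket {Ω I : Type*} [MeasurableSpace Ω] [StandardBorelSpace Ω]
    (μ : Measure Ω) [IsFiniteMeasure μ] (A : Ω → ℝ) (V : I → Ω → ℝ) (J : Set I) : Prop :=
  CondIndepGiven μ A (subvec V (Set.univ \ J)) (subvec V J)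

/-- `J ∈ 𝔯_{Y|A}(V)`: `J` is an outcome Markov blanket of the family `V`,
i.e. `Y ⊥⊥ V_{I∖J} | (A, V_J)`. -/
def IsOutBlanket {Ω I : Type*} [MeasurableSpace Ω] [StandardBorelSpace Ω]
    (μ : Measure Ω) [IsFiniteMeasure μ] (A Y : Ω → ℝ) (V : I → Ω → ℝ) (J : Set I) : Prop :=
  CondIndepGiven μ Y (subvec V (Set.univ \ J)) (fun ω => (A ω, subvec V J ω))

/-- `R_A(V_J)`: the treatment Markov boundary of the subfamily `(V_i)_{i ∈ J}`, i.e. the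
intersection of all `J' ⊆ J` such that `A ⊥⊥ V_{J∖J'} | V_{J'}`. -/
def treatBoundary {Ω I : Type*} [MeasurableSpace Ω] [StandardBorelSpace Ω]
    (μ : Measure Ω) [IsFiniteMeasure μ] (A : Ω → ℝ) (V : I → Ω → ℝ) (J : Set I) : Set I :=
  ⋂₀ {J' : Set I | J' ⊆ J ∧ CondIndepGiven μ A (subvec V (J \ J')) (subvec V J')}

/-- `R_{Y|A}(V_J)`: the outcome Markov boundary of the subfamily `(V_i)_{i ∈ J}`, i.e. the
intersection of all `J' ⊆ J` such that `Y ⊥⊥ V_{J∖J'} | (A, V_{J'})`. -/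
def outBoundary {Ω I : Type*} [MeasurableSpace Ω] [StandardBorelSpace Ω]
    (μ : Measure Ω) [IsFiniteMeasure μ] (A Y : Ω → ℝ) (V : I → Ω → ℝ) (J : Set I) : Set I :=
  ⋂₀ {J' : Set I | J' ⊆ J ∧
        CondIndepGiven μ Y (subvec V (J \ J')) (fun ω => (A ω, subvec V J' ω))}

/-- `A` is a binary treatment taking values in `{0, 1}`. -/
def IsBinary {Ω : Type*} (A : Ω → ℝ) : Prop :=
  ∀ ω, A ω = 0 ∨ A ω = 1

/-- Consistency of the observed outcome `Y` with the potential outcomes `Y₀, Y₁`: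
`Y = Y₁` a.s. on `{A = 1}` and `Y = Y₀` a.s. on `{A = 0}`. -/
def Consistency {Ω : Type*} [MeasurableSpace Ω] (μ : Measure Ω) (A Y Y0 Y1 : Ω → ℝ) : Prop :=
  (∀ᵐ ω ∂μ, A ω = 1 → Y ω = Y1 ω) ∧ (∀ᵐ ω ∂μ, A ω = 0 → Y ω = Y0 ω)

/-- The random vector `C` controls for confounding: `Y_a ⊥⊥ A | C` for `a = 0, 1`. -/
def ControlsConfounding {Ω γ : Type*} [MeasurableSpace Ω] [StandardBorelSpace Ω]
    [MeasurableSpace γ] (μ : Measure Ω) [IsFiniteMeasure μ]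
    (A Y0 Y1 : Ω → ℝ) (C : Ω → γ) : Prop :=
  CondIndepGiven μ Y0 A C ∧ CondIndepGiven μ Y1 A C

/-- The vector which agrees with `v` on `J` and with `w` off `J`. -/
noncomputable def mixOn {I : Type*} (J : Set I) (v w : I → ℝ) : I → ℝ :=
  open Classical in fun i => if i ∈ J then v i else w i

lemma measurable_mixOn {I : Type*} (J : Set I) :
    Measurable fun p : (I → ℝ) × (I → ℝ) => mixOn J p.1 p.2 := by
  refine measurable_pi_lambda _ fun i => ?_
  by_cases h : i ∈ J
  · simp only [mixOn, h, if_true]; fun_prop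
  · simp only [mixOn, h, if_false]; fun_prop

/-- Exchanging the coordinates off `J` for an independent copy preserves a product law. -/
lemma measurePreserving_mixOn {I : Type*} [Fintype I] (J : Set I) (ν : I → Measure ℝ)
    [∀ i, IsProbabilityMeasure (ν i)] :
    MeasurePreserving (fun p : (I → ℝ) × (I → ℝ) => mixOn J p.1 p.2)
      ((Measure.pi ν).prod (Measure.pi ν)) (Measure.pi ν) := by
  classical
  refine ⟨measurable_mixOn J, (Measure.pi_eq fun s hs => ?_).symm⟩
  have hpre : (fun p : (I → ℝ) × (I → ℝ) => mixOn J p.1 p.2) ⁻¹' (Set.univ.pi s) =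
      (Set.univ.pi fun i => if i ∈ J then s i else Set.univ) ×ˢ
        (Set.univ.pi fun i => if i ∈ J then Set.univ else s i) := by
    ext p
    simp only [Set.mem_preimage, Set.mem_pi, Set.mem_univ, true_imp_iff, Set.mem_prod,
      ← forall_and, mixOn]
    refine forall_congr' fun i => ?_
    by_cases h : i ∈ J <;> simp [h]
  rw [Measure.map_apply (measurable_mixOn J) (MeasurableSet.univ_pi hs), hpre,
    Measure.prod_prod, Measure.pi_pi, Measure.pi_pi, ← Finset.prod_mul_distrib]
  refine Finset.prod_congr rfl fun i _ => ?_
  by_cases h : i ∈ J <;> simp [h]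

/-- If under a product law a function of `(z, v_{J₁})` agrees a.e. with a function of
`(z, v_{J₂})`, then it is a.e. unchanged when the coordinates off `J₁ ∩ J₂` are frozen at a
suitable `w`. -/
lemma exists_ae_eq_freeze {β I γ : Type*} [MeasurableSpace β] [Fintype I] (J₁ J₂ : Set I)
    (ρ : Measure β) [IsProbabilityMeasure ρ] (ν : I → Measure ℝ)
    [∀ i, IsProbabilityMeasure (ν i)] (g₁ g₂ : β × (I → ℝ) → γ)
    (hg₁ : ∀ z v w, (∀ i ∈ J₁, v i = w i) → g₁ (z, v) = g₁ (z, w))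
    (hg₂ : ∀ z v w, (∀ i ∈ J₂, v i = w i) → g₂ (z, v) = g₂ (z, w))
    (h : ∀ᵐ p ∂(ρ.prod (Measure.pi ν)), g₁ p = g₂ p) :
    ∃ w, ∀ᵐ p ∂(ρ.prod (Measure.pi ν)), g₁ p = g₁ (p.1, mixOn (J₁ ∩ J₂) p.2 w) := by
  have hmix (J : Set I) :
      ∀ᵐ q ∂((Measure.pi ν).prod (ρ.prod (Measure.pi ν))),
        g₁ (q.2.1, mixOn J q.2.2 q.1) = g₂ (q.2.1, mixOn J q.2.2 q.1) := by
    have hmp := (((MeasurePreserving.id ρ).prod (measurePreserving_mixOn J ν)).comp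
      (measurePreserving_prodAssoc ρ (Measure.pi ν) (Measure.pi ν))).comp
      (Measure.measurePreserving_swap (μ := Measure.pi ν) (ν := ρ.prod (Measure.pi ν)))
    exact hmp.quasiMeasurePreserving.ae h
  have key : ∀ᵐ q ∂((Measure.pi ν).prod (ρ.prod (Measure.pi ν))),
      g₁ q.2 = g₁ (q.2.1, mixOn (J₁ ∩ J₂) q.2.2 q.1) := by
    filter_upwards [hmix J₁, hmix (J₁ ∩ J₂)] with q hq₁ hq₂
    calc g₁ q.2 = g₁ (q.2.1, mixOn J₁ q.2.2 q.1) :=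
          hg₁ _ _ _ fun i hi => by simp [mixOn, hi]
      _ = g₂ (q.2.1, mixOn J₁ q.2.2 q.1) := hq₁
      _ = g₂ (q.2.1, mixOn (J₁ ∩ J₂) q.2.2 q.1) :=
          hg₂ _ _ _ fun i hi => by by_cases h' : i ∈ J₁ <;> simp [mixOn, hi, h']
      _ = g₁ (q.2.1, mixOn (J₁ ∩ J₂) q.2.2 q.1) := hq₂.symm
  exact (Measure.ae_ae_of_ae_prod key).exists

/-- A positive density makes the product law absolutely continuous with respect to the joint
law. -/
lemma PositivePairDensity.prod_absolutelyContinuous {Ω α I : Type*} [MeasurableSpace Ω]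
    [MeasurableSpace α] [Fintype I] {μ : Measure Ω} [IsFiniteMeasure μ] {W : Ω → α}
    {V : I → Ω → ℝ} (h : PositivePairDensity μ W V) :
    (μ.map W).prod (Measure.pi fun i => μ.map (V i)) ≪
      μ.map (fun ω => (W ω, fun i => V i ω)) := by
  have h' := withDensity_absolutelyContinuous'
    (Measure.measurable_rnDeriv (μ.map (fun ω => (W ω, fun i => V i ω)))
      ((μ.map W).prod (Measure.pi fun i => μ.map (V i)))).aemeasurable
    (h.2.mono fun _ hx => hx.ne')
  rwa [Measure.withDensity_rnDeriv_eq _ _ h.1] at h'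

lemma measurable_subvec {Ω I : Type*} [MeasurableSpace Ω] {V : I → Ω → ℝ}
    (hV : ∀ i, Measurable (V i)) (J : Set I) : Measurable (subvec V J) :=
  measurable_pi_lambda _ fun i => hV i

/-- The conditional probability of `X ∈ s` given all of `(Z, V)` is, when `J` is a blanket,
a version of the one given `(Z, V_J)`. -/
lemma condExp_eq_of_blanket {Ω α β I : Type*} [MeasurableSpace Ω] [StandardBorelSpace Ω]
    [MeasurableSpace α] [StandardBorelSpace α] [Nonempty α] [MeasurableSpace β]
    [Fintype I] {μ : Measure Ω} [IsProbabilityMeasure μ]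
    {X : Ω → α} {Z : Ω → β} {V : I → Ω → ℝ}
    (hX : Measurable X) (hZ : Measurable Z) (hV : ∀ i, Measurable (V i)) {J : Set I}
    (h : CondIndepGiven μ X (subvec V (Set.univ \ J)) (fun ω => (Z ω, subvec V J ω)))
    {s : Set α} (hs : MeasurableSet s) :
    μ⟦X ⁻¹' s | MeasurableSpace.comap (fun ω => (Z ω, fun i => V i ω)) inferInstance⟧ =ᵐ[μ]
      fun ω => (condDistrib X (fun ω => (Z ω, subvec V J ω)) μ (Z ω, subvec V J ω)).real s := by
  obtain ⟨hle, h⟩ := h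
  have hW : Measurable (fun ω => (Z ω, subvec V J ω)) := hZ.prodMk (measurable_subvec hV J)
  have hY := measurable_subvec hV (Set.univ \ J)
  have hae := (condIndepFun_iff_condDistrib_prod_ae_eq_prodMkRight hX hY hW).1 h.symm
  have hcond := condDistrib_ae_eq_condExp (μ := μ) (hW.prodMk hY) hX hs
  have hcomap : MeasurableSpace.comap (fun ω => (Z ω, fun i => V i ω)) inferInstance =
      MeasurableSpace.comap (fun ω => ((Z ω, subvec V J ω), subvec V (Set.univ \ J) ω))
        inferInstance := by
    classical
    apply le_antisymm
    · let e : (β × (J → ℝ)) × ((Set.univ \ J : Set I) → ℝ) → β × (I → ℝ) := fun p =>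
        (p.1.1, fun i => if hi : i ∈ J then p.1.2 ⟨i, hi⟩ else p.2 ⟨i, trivial, hi⟩)
      have he : Measurable e := by
        refine (measurable_fst.comp measurable_fst).prodMk (measurable_pi_lambda _ fun i => ?_)
        by_cases hi : i ∈ J
        · simp only [hi, dite_true]; fun_prop
        · simp only [hi, dite_false]; fun_prop
      have : (fun ω => (Z ω, fun i => V i ω)) =
          e ∘ fun ω => ((Z ω, subvec V J ω), subvec V (Set.univ \ J) ω) := by
        funext ω
        simp [e, subvec]
      rw [this, ← MeasurableSpace.comap_comp]
      exact MeasurableSpace.comap_mono he.comap_le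
    · let e : β × (I → ℝ) → (β × (J → ℝ)) × ((Set.univ \ J : Set I) → ℝ) := fun p =>
        ((p.1, fun i => p.2 i), fun i => p.2 i)
      have he : Measurable e := by fun_prop
      have : (fun ω => ((Z ω, subvec V J ω), subvec V (Set.univ \ J) ω)) =
          e ∘ fun ω => (Z ω, fun i => V i ω) := rfl
      rw [this, ← MeasurableSpace.comap_comp]
      exact MeasurableSpace.comap_mono he.comap_le
  rw [hcomap]
  refine hcond.symm.trans ?_
  filter_upwards [ae_of_ae_map (hW.prodMk hY).aemeasurable hae] with ω hω
  rw [hω, Kernel.prodMkRight_apply]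

/-- If, for each event of `X`, its conditional probability given `m ⊇ σ(Y) ∨ m'` has an
`m'`-measurable version, then `X` and `Y` are conditionally independent given `m'`. -/
lemma condIndepFun_of_condExp {Ω α γ : Type*} {m' m : MeasurableSpace Ω} [mΩ : MeasurableSpace Ω]
    [StandardBorelSpace Ω] [MeasurableSpace α] [MeasurableSpace γ]
    {μ : Measure Ω} [IsProbabilityMeasure μ] {X : Ω → α} {Y : Ω → γ}
    (hX : Measurable X) (hm' : m' ≤ m) (hm : m ≤ mΩ) (hY : Measurable[m] Y)
    (h : ∀ s, MeasurableSet s → ∃ f : Ω → ℝ, StronglyMeasurable[m'] f ∧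
      μ⟦X ⁻¹' s | m⟧ =ᵐ[μ] f) :
    CondIndepFun m' (hm'.trans hm) X Y μ := by
  rw [condIndepFun_iff_condExp_inter_preimage_eq_mul hX (hY.mono hm le_rfl)]
  intro s t hs ht
  obtain ⟨f, hf, hsf⟩ := h s hs
  have hfi : Integrable f μ := integrable_condExp.congr hsf
  have hsi : Integrable ((X ⁻¹' s).indicator fun _ => (1 : ℝ)) μ :=
    (integrable_const _).indicator (hX hs)
  have hti : Integrable ((Y ⁻¹' t).indicator fun _ => (1 : ℝ)) μ :=
    (integrable_const _).indicator (hm _ (hY ht))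
  have hmul (a : Ω → ℝ) :
      (Y ⁻¹' t).indicator a = a * (Y ⁻¹' t).indicator fun _ => (1 : ℝ) := by
    funext ω
    by_cases hω : ω ∈ Y ⁻¹' t <;> simp [hω]
  have h1 : μ⟦X ⁻¹' s | m'⟧ =ᵐ[μ] f := by
    refine (condExp_condExp_of_le hm' hm).symm.trans ((condExp_congr_ae hsf).trans ?_)
    rw [condExp_of_stronglyMeasurable (hm'.trans hm) hf hfi]
  have h2 : μ⟦X ⁻¹' s ∩ Y ⁻¹' t | m⟧ =ᵐ[μ] f * (Y ⁻¹' t).indicator fun _ => (1 : ℝ) := by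
    rw [Set.inter_comm, ← Set.indicator_indicator]
    refine (condExp_indicator hsi (hY ht)).trans ?_
    rw [hmul]
    exact hsf.mul (ae_eq_refl _)
  have h3 : μ⟦X ⁻¹' s ∩ Y ⁻¹' t | m'⟧ =ᵐ[μ] f * μ⟦Y ⁻¹' t | m'⟧ := by
    refine (condExp_condExp_of_le hm' hm).symm.trans ((condExp_congr_ae h2).trans ?_)
    refine condExp_mul_of_stronglyMeasurable_left hf ?_ hti
    rw [← hmul]
    exact hfi.indicator (hm _ (hY ht))
  exact h3.trans (h1.symm.mul (ae_eq_refl _))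

/-- the collection of Markov blankets `𝔯_{X|Z}(V)` is closed under
intersection, assuming the joint law of `(Z, (V_i)_{i ∈ I})` has an a.e. positive density
with respect to the product of its one-dimensional marginal laws. -/
theorem blanket_inter_closed
    {Ω α β I : Type*} [MeasurableSpace Ω] [StandardBorelSpace Ω]
    [MeasurableSpace α] [StandardBorelSpace α] [MeasurableSpace β] [StandardBorelSpace β]
    [Fintype I]
    (μ : Measure Ω) [IsProbabilityMeasure μ]
    (X : Ω → α) (Z : Ω → β) (V : I → Ω → ℝ)
    (hX : Measurable X) (hZ : Measurable Z) (hV : ∀ i, Measurable (V i))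
    (hpos : PositivePairDensity μ Z V)
    (J₁ J₂ : Set I)
    (h₁ : CondIndepGiven μ X (subvec V (Set.univ \ J₁)) (fun ω => (Z ω, subvec V J₁ ω)))
    (h₂ : CondIndepGiven μ X (subvec V (Set.univ \ J₂)) (fun ω => (Z ω, subvec V J₂ ω))) :
    CondIndepGiven μ X (subvec V (Set.univ \ (J₁ ∩ J₂)))
      (fun ω => (Z ω, subvec V (J₁ ∩ J₂) ω)) := by
  have : Nonempty α := (nonempty_of_isProbabilityMeasure μ).map X
  have (i : I) : IsProbabilityMeasure (μ.map (V i)) :=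
    Measure.isProbabilityMeasure_map (hV i).aemeasurable
  have : IsProbabilityMeasure (μ.map Z) := Measure.isProbabilityMeasure_map hZ.aemeasurable
  have hZV : Measurable (fun ω => (Z ω, fun i => V i ω)) := hZ.prodMk (measurable_pi_lambda _ hV)
  have hm' : MeasurableSpace.comap (fun ω => (Z ω, subvec V (J₁ ∩ J₂) ω)) inferInstance ≤
      MeasurableSpace.comap (fun ω => (Z ω, fun i => V i ω)) inferInstance := by
    let e : β × (I → ℝ) → β × ((J₁ ∩ J₂ : Set I) → ℝ) := fun p => (p.1, fun i => p.2 i)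
    have he : Measurable e := by fun_prop
    have : (fun ω => (Z ω, subvec V (J₁ ∩ J₂) ω)) = e ∘ fun ω => (Z ω, fun i => V i ω) := rfl
    rw [this, ← MeasurableSpace.comap_comp]
    exact MeasurableSpace.comap_mono he.comap_le
  have hY : Measurable[MeasurableSpace.comap (fun ω => (Z ω, fun i => V i ω)) inferInstance]
      (subvec V (Set.univ \ (J₁ ∩ J₂))) := by
    let e : β × (I → ℝ) → ((Set.univ \ (J₁ ∩ J₂) : Set I) → ℝ) := fun p i => p.2 i
    have he : Measurable e := by fun_prop
    exact he.comp (comap_measurable (fun ω => (Z ω, fun i => V i ω)))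
  refine ⟨hm'.trans hZV.comap_le, condIndepFun_of_condExp hX hm' hZV.comap_le hY fun s hs => ?_⟩
  -- `g J (z, v)` is the conditional probability of `X ∈ s` given `Z = z` and `V_J = v_J`.
  let g (J : Set I) (p : β × (I → ℝ)) : ℝ :=
    (condDistrib X (fun ω => (Z ω, subvec V J ω)) μ (p.1, fun i => p.2 i)).real s
  have hg (J : Set I) : Measurable (g J) := by
    have he : Measurable fun p : β × (I → ℝ) => (p.1, fun i : J => p.2 i) := by fun_prop
    exact ((Kernel.measurable_coe _ hs).comp he).ennreal_toReal
  have hdep (J : Set I) (z v w) (h : ∀ i ∈ J, v i = w i) : g J (z, v) = g J (z, w) := by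
    have : (fun i : J => v i) = fun i : J => w i := funext fun i => h i i.2
    simp only [g, this]
  have e₁ := condExp_eq_of_blanket hX hZ hV h₁ hs
  have e₂ := condExp_eq_of_blanket hX hZ hV h₂ hs
  have heq : ∀ᵐ p ∂((μ.map Z).prod (Measure.pi fun i => μ.map (V i))), g J₁ p = g J₂ p := by
    refine hpos.prod_absolutelyContinuous.ae_le
      (?_ : ∀ᵐ p ∂(μ.map fun ω => (Z ω, fun i => V i ω)), g J₁ p = g J₂ p)
    rw [ae_map_iff hZV.aemeasurable (measurableSet_eq_fun (hg J₁) (hg J₂))]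
    exact e₁.symm.trans e₂
  obtain ⟨w, hw⟩ := exists_ae_eq_freeze J₁ J₂ _ _ (g J₁) (g J₂) (hdep J₁) (hdep J₂) heq
  refine ⟨fun ω => g J₁ (Z ω, mixOn (J₁ ∩ J₂) (fun i => V i ω) w), ?_, ?_⟩
  · classical
    let e : β × ((J₁ ∩ J₂ : Set I) → ℝ) → β × (I → ℝ) := fun p =>
      (p.1, fun i => if hi : i ∈ J₁ ∩ J₂ then p.2 ⟨i, hi⟩ else w i)
    have he : Measurable e := by
      refine measurable_fst.prodMk (measurable_pi_lambda _ fun i => ?_)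
      by_cases hi : i ∈ J₁ ∩ J₂
      · simp only [hi, dite_true]; fun_prop
      · simp only [hi, dite_false]; fun_prop
    have hfac : (fun ω => g J₁ (Z ω, mixOn (J₁ ∩ J₂) (fun i => V i ω) w)) =
        (g J₁ ∘ e) ∘ fun ω => (Z ω, subvec V (J₁ ∩ J₂) ω) := by
      funext ω
      simp only [Function.comp, e, subvec]
      congr 2
      funext i
      by_cases hi : i ∈ J₁ ∩ J₂ <;> simp only [mixOn, hi, if_true, if_false, dite_true, dite_false]
    rw [hfac]
    exact (((hg J₁).comp he).comp
      (comap_measurable (fun ω => (Z ω, subvec V (J₁ ∩ J₂) ω)))).stronglyMeasurable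
  · exact e₁.trans (ae_of_ae_map hZV.aemeasurable (hpos.1.ae_le hw))
end

section
/- Let A be a random variable and V = (V_i)_{i ∈ I} a finite family of random variables. If the joint law of (V_i)_{i ∈ I} is absolutely continuous with respect to the product ⨂_{i ∈ I} P_{V_i} of its one-dimensional marginal laws with a density that is positive almost everywhere, then the collection of treatment Markov blankets 𝔯_A(V) is closed under intersection: J_1, J_2 ∈ 𝔯_A(V) implies J_1 ∩ J_2 ∈ 𝔯_A(V). -/
/-!
That `J` is a treatment Markov blanket means that, for each Borel set `B`, `P(A ∈ B | V)` is
a.s. a function of `V_J` alone (`IsTreatBlanket.exists_condExp_ae_eq`, and conversely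
`condIndepFun_of_forall_condExp_ae_eq`). If `J₁` and `J₂` are both blankets, then
`P(A ∈ B | V) = f(V_{J₁}) = g(V_{J₂})` a.s.; since the joint law of `V` and the product `ν` of its
marginals are mutually absolutely continuous, `f(x_{J₁}) = g(x_{J₂})` for `ν`-a.e. `x`.

Under `ν` the coordinates are independent, so replacing the coordinates of `x` outside `J₁` by
those of an independent copy `y` yields a point which is again distributed according to `ν`
(`measurePreserving_merge`). By Fubini there is one `y` for which, for a.e. `x`,
`f(x_{J₁}) = g((x_{J₁ ∩ J₂}, y_{J₂ ∖ J₁}))`, and the right-hand side is a function of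
`x_{J₁ ∩ J₂}` only (`exists_inter_factor`). Pulled back along `V`, this
says that `P(A ∈ B | V)` is a function of `V_{J₁ ∩ J₂}`.
-/

open MeasureTheory ProbabilityTheory

/-- The subvector of `x` indexed by `J`. -/
def coordRestr {I : Type*} (J : Set I) (x : I → ℝ) : J → ℝ := fun j => x j

open Classical in
/-- The point whose coordinates in `J` are those of `p.1`, and whose other coordinates are those
of `p.2`. -/
noncomputable def merge {I : Type*} (J : Set I) (p : (I → ℝ) × (I → ℝ)) : I → ℝ :=
  fun i => if i ∈ J then p.1 i else p.2 i

lemma measurable_coordRestr {I : Type*} (J : Set I) : Measurable (coordRestr J) :=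
  measurable_pi_lambda _ fun j => measurable_pi_apply (j : I)

lemma measurable_merge {I : Type*} (J : Set I) : Measurable (merge J) := by
  refine measurable_pi_lambda _ fun i => ?_
  unfold merge
  split_ifs <;> fun_prop

lemma measurePreserving_merge {I : Type*} [Fintype I] (J : Set I) (ρ : I → Measure ℝ)
    [∀ i, IsProbabilityMeasure (ρ i)] :
    MeasurePreserving (merge J) ((Measure.pi ρ).prod (Measure.pi ρ)) (Measure.pi ρ) := by
  classical
  refine ⟨measurable_merge J, (Measure.pi_eq fun s hs => ?_).symm⟩
  rw [Measure.map_apply (measurable_merge J) (MeasurableSet.univ_pi hs)]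
  have hpre : merge J ⁻¹' (Set.univ.pi s) =
      (Set.univ.pi fun i => if i ∈ J then s i else Set.univ) ×ˢ
        (Set.univ.pi fun i => if i ∈ J then Set.univ else s i) := by
    ext p
    simp only [merge, Set.mem_preimage, Set.mem_univ_pi, Set.mem_prod, ← forall_and]
    refine forall_congr' fun i => ?_
    split_ifs <;> simp
  rw [hpre, Measure.prod_prod, Measure.pi_pi, Measure.pi_pi, ← Finset.prod_mul_distrib]
  refine Finset.prod_congr rfl fun i _ => ?_
  split_ifs <;> simp

/-- Under a product measure, a function of `x_{J₁}` that is a.e. equal to a function of `x_{J₂}`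
is a.e. equal to a function of `x_{J₁ ∩ J₂}`. -/
lemma exists_inter_factor {I : Type*} [Fintype I] (ρ : I → Measure ℝ)
    [∀ i, IsProbabilityMeasure (ρ i)] {J₁ J₂ : Set I} {f : (J₁ → ℝ) → ℝ} {g : (J₂ → ℝ) → ℝ}
    (hg : Measurable g)
    (hfg : ∀ᵐ x ∂Measure.pi ρ, f (coordRestr J₁ x) = g (coordRestr J₂ x)) :
    ∃ h : (↥(J₁ ∩ J₂) → ℝ) → ℝ, Measurable h ∧
      ∀ᵐ x ∂Measure.pi ρ, f (coordRestr J₁ x) = h (coordRestr (J₁ ∩ J₂) x) := by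
  classical
  have hswap := ((measurePreserving_merge J₁ ρ).comp
    (Measure.measurePreserving_swap (μ := Measure.pi ρ) (ν := Measure.pi ρ)))
    |>.quasiMeasurePreserving.ae hfg
  obtain ⟨y, hy⟩ := (Measure.ae_ae_of_ae_prod hswap).exists
  -- Glue the given coordinates in `J₁ ∩ J₂` with the fixed coordinates `y` in `J₂ ∖ J₁`.
  refine ⟨fun z => g fun j => if hj : (j : I) ∈ J₁ then z ⟨j, hj, j.2⟩ else y j,
    hg.comp (measurable_pi_lambda _ fun j => ?_), ?_⟩
  · split_ifs <;> fun_prop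
  · filter_upwards [hy] with x hx
    have h1 : coordRestr J₁ (merge J₁ (x, y)) = coordRestr J₁ x := by
      ext j
      simp [coordRestr, merge]
    have h2 : coordRestr J₂ (merge J₁ (x, y)) =
        fun j : J₂ => if hj : (j : I) ∈ J₁ then coordRestr (J₁ ∩ J₂) x ⟨j, hj, j.2⟩ else y j := by
      ext j
      simp [coordRestr, merge]
    simp only [Function.comp_apply, Prod.swap_prod_mk] at hx
    rw [h1, h2] at hx
    exact hx

lemma PositiveFamilyDensity.absolutelyContinuous {Ω I : Type*} [MeasurableSpace Ω] [Fintype I]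
    {μ : Measure Ω} [IsProbabilityMeasure μ] {V : I → Ω → ℝ} (hpos : PositiveFamilyDensity μ V) :
    Measure.pi (fun i => μ.map (V i)) ≪ μ.map (fun ω i => V i ω) := by
  have h := withDensity_absolutelyContinuous' (Measure.measurable_rnDeriv
    (μ.map (fun ω i => V i ω)) (Measure.pi (fun i => μ.map (V i)))).aemeasurable
    (hpos.2.mono fun x hx => hx.ne')
  rwa [Measure.withDensity_rnDeriv_eq _ _ hpos.1] at h

lemma comap_subvec_prod {Ω I : Type*} (V : I → Ω → ℝ) (J : Set I) :
    MeasurableSpace.comap (fun ω => (subvec V J ω, subvec V (Set.univ \ J) ω)) inferInstance =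
      MeasurableSpace.comap (fun ω i => V i ω) inferInstance := by
  classical
  apply le_antisymm
  · have hm : Measurable fun x : I → ℝ => (coordRestr J x, coordRestr (Set.univ \ J) x) :=
      (measurable_coordRestr J).prodMk (measurable_coordRestr _)
    have := MeasurableSpace.comap_mono (g := fun ω i => V i ω) hm.comap_le
    rwa [MeasurableSpace.comap_comp] at this
  · have hm : Measurable fun (p : (J → ℝ) × (↥(Set.univ \ J) → ℝ)) (i : I) =>
        if hi : i ∈ J then p.1 ⟨i, hi⟩ else p.2 ⟨i, Set.mem_univ i, hi⟩ := by
      refine measurable_pi_lambda _ fun i => ?_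
      split_ifs <;> fun_prop
    have := MeasurableSpace.comap_mono
      (g := fun ω => (subvec V J ω, subvec V (Set.univ \ J) ω)) hm.comap_le
    rw [MeasurableSpace.comap_comp] at this
    refine le_trans (le_of_eq ?_) this
    congr 1
    funext ω i
    by_cases hi : i ∈ J <;> simp [subvec, hi]

/-- If `J` is a treatment Markov blanket, then `P(A ∈ B | V)` is a.s. a measurable function
of `V_J`. -/
lemma IsTreatBlanket.exists_condExp_ae_eq {Ω I : Type*} [MeasurableSpace Ω] [StandardBorelSpace Ω]
    [Fintype I] {μ : Measure Ω} [IsProbabilityMeasure μ] {A : Ω → ℝ} {V : I → Ω → ℝ}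
    (hA : Measurable A) (hV : ∀ i, Measurable (V i)) {J : Set I} (h : IsTreatBlanket μ A V J)
    {B : Set ℝ} (hB : MeasurableSet B) :
    ∃ f : (J → ℝ) → ℝ, Measurable f ∧
      μ⟦A ⁻¹' B | MeasurableSpace.comap (fun ω i => V i ω) inferInstance⟧ =ᵐ[μ]
        fun ω => f (subvec V J ω) := by
  obtain ⟨hle, h⟩ := h
  have hJ := measurable_subvec hV J
  have hJc := measurable_subvec hV (Set.univ \ J)
  have hd := (condIndepFun_iff_condDistrib_prod_ae_eq_prodMkRight hA hJc hJ).1 h.symm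
  refine ⟨fun x => (condDistrib A (subvec V J) μ x).real B,
    (Kernel.measurable_coe _ hB).ennreal_toReal, ?_⟩
  have hc := condDistrib_ae_eq_condExp (μ := μ) (hJ.prodMk hJc) hA hB
  have hcomap := comap_subvec_prod V J
  rw [← hcomap]
  filter_upwards [hc, ae_of_ae_map (hJ.prodMk hJc).aemeasurable hd] with ω h1 h2
  rw [← h1, h2, Kernel.prodMkRight_apply]

/-- If the conditional probabilities of `X` given a σ-algebra `m` making `Y` measurable are all
a.s. `m₀`-measurable, for some `m₀ ≤ m`, then `X` and `Y` are conditionally independent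
given `m₀`. -/
lemma condIndepFun_of_forall_condExp_ae_eq {Ω α β : Type*}
    {m₀ m mΩ : MeasurableSpace Ω} [StandardBorelSpace Ω] [MeasurableSpace α] [mβ : MeasurableSpace β] {μ : Measure Ω}
    [IsProbabilityMeasure μ] (hm₀ : m₀ ≤ mΩ) (hm₀m : m₀ ≤ m)
    (hm : m ≤ mΩ)
    {X : Ω → α} {Y : Ω → β} (hX : Measurable X) (hY : Measurable[m] Y)
    (H : ∀ B, MeasurableSet B → ∃ h : Ω → ℝ, StronglyMeasurable[m₀] h ∧ μ⟦X ⁻¹' B | m⟧ =ᵐ[μ] h) :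
    CondIndepFun m₀ hm₀ X Y μ := by
  rw [condIndepFun_iff_condExp_inter_preimage_eq_mul hX (hY.mono hm le_rfl)]
  intro s t hs ht
  obtain ⟨h, hh, hae⟩ := H s hs
  have hsX : MeasurableSet (X ⁻¹' s) := hX hs
  have htm : MeasurableSet[m] (Y ⁻¹' t) := hY ht
  have htY : MeasurableSet (Y ⁻¹' t) := hm _ htm
  have hint : Integrable ((X ⁻¹' s).indicator fun _ => (1 : ℝ)) μ :=
    (integrable_const _).indicator hsX
  have htint : Integrable ((Y ⁻¹' t).indicator fun _ => (1 : ℝ)) μ :=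
    (integrable_const _).indicator htY
  have hhint : Integrable h μ := integrable_condExp.congr hae
  have hprod : Integrable (h * (Y ⁻¹' t).indicator fun _ => (1 : ℝ)) μ := by
    have : (h * (Y ⁻¹' t).indicator fun _ => (1 : ℝ)) = (Y ⁻¹' t).indicator h := by
      ext ω
      by_cases hω : ω ∈ Y ⁻¹' t <;> simp [hω]
    rw [this]
    exact hhint.indicator htY
  have h1 : μ⟦X ⁻¹' s | m₀⟧ =ᵐ[μ] h :=
    (condExp_condExp_of_le hm₀m hm).symm.trans ((condExp_congr_ae hae).trans
      (condExp_of_stronglyMeasurable hm₀ hh hhint).eventuallyEq)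
  have h2 : μ⟦X ⁻¹' s ∩ Y ⁻¹' t | m⟧ =ᵐ[μ] h * (Y ⁻¹' t).indicator fun _ => (1 : ℝ) := by
    have := condExp_indicator (m := m) hint htm
    rw [Set.indicator_indicator, Set.inter_comm] at this
    filter_upwards [this, hae] with ω hω1 hω2
    rw [hω1]
    by_cases hω : ω ∈ Y ⁻¹' t <;> simp [hω, hω2]
  have h3 : μ⟦X ⁻¹' s ∩ Y ⁻¹' t | m₀⟧ =ᵐ[μ] h * μ⟦Y ⁻¹' t | m₀⟧ :=
    (condExp_condExp_of_le hm₀m hm).symm.trans ((condExp_congr_ae h2).trans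
      (condExp_mul_of_stronglyMeasurable_left hh hprod htint))
  filter_upwards [h1, h3] with ω hω1 hω3
  rw [hω3, Pi.mul_apply, hω1]

/-- the collection of treatment Markov blankets `𝔯_A(V)` is closed under
intersection, assuming the joint law of `(V_i)_{i ∈ I}` has an a.e. positive density with
respect to the product of its one-dimensional marginal laws. -/
theorem treatBlanket_inter_closed
    {Ω I : Type*} [MeasurableSpace Ω] [StandardBorelSpace Ω] [Fintype I]
    (μ : Measure Ω) [IsProbabilityMeasure μ]
    (A : Ω → ℝ) (V : I → Ω → ℝ)
    (hA : Measurable A) (hV : ∀ i, Measurable (V i))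
    (hpos : PositiveFamilyDensity μ V)
    (J₁ J₂ : Set I)
    (h₁ : IsTreatBlanket μ A V J₁) (h₂ : IsTreatBlanket μ A V J₂) :
    IsTreatBlanket μ A V (J₁ ∩ J₂) := by
  have hVm : Measurable fun ω i => V i ω := measurable_pi_lambda _ hV
  have hprob : ∀ i, IsProbabilityMeasure (μ.map (V i)) := fun i =>
    Measure.isProbabilityMeasure_map (hV i).aemeasurable
  have hsub (J : Set I) :
      Measurable[MeasurableSpace.comap (fun ω i => V i ω) inferInstance] (subvec V J) :=
    (measurable_coordRestr J).comp (comap_measurable _)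
  refine ⟨(measurable_subvec hV _).comap_le,
    condIndepFun_of_forall_condExp_ae_eq _ (hsub _).comap_le hVm.comap_le hA (hsub _)
      fun B hB => ?_⟩
  obtain ⟨f, hf, hfae⟩ := h₁.exists_condExp_ae_eq hA hV hB
  obtain ⟨g, hg, hgae⟩ := h₂.exists_condExp_ae_eq hA hV hB
  have hfg : ∀ᵐ x ∂μ.map (fun ω i => V i ω), f (coordRestr J₁ x) = g (coordRestr J₂ x) := by
    refine (ae_map_iff hVm.aemeasurable (measurableSet_eq_fun (hf.comp (measurable_coordRestr _))
      (hg.comp (measurable_coordRestr _)))).2 ?_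
    exact hfae.symm.trans hgae
  obtain ⟨h, hh, hhae⟩ := exists_inter_factor (fun i => μ.map (V i)) hg
    (hpos.absolutelyContinuous.ae_le hfg)
  refine ⟨fun ω => h (subvec V (J₁ ∩ J₂) ω),
    (hh.comp (comap_measurable _)).stronglyMeasurable, hfae.trans ?_⟩
  exact ae_of_ae_map hVm.aemeasurable (hpos.1.ae_le hhae)
end

section
/- Let A and Y be random variables and V = (V_i)_{i ∈ I} a finite family of random variables. If the joint law of (A, (V_i)_{i ∈ I}) is absolutely continuous with respect to the product P_A ⊗ ⨂_{i ∈ I} P_{V_i} of its one-dimensional marginal laws with a density that is positive almost everywhere, then the collection of outcome Markov blankets 𝔯_{Y|A}(V) is closed under intersection: J_1, J_2 ∈ 𝔯_{Y|A}(V) implies J_1 ∩ J_2 ∈ 𝔯_{Y|A}(V). -/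
/-!
Write `m_J` for the σ-algebra of `(A, V_J)` and `m` for that of `(A, V)`. Blanket membership of
`J` says that `P(Y ∈ s | m) = P(Y ∈ s | m_J)` a.s. for every Borel set `s`
(`CondIndepFun.condExp_prodMk_ae_eq` and `condIndepFun_of_condExp_ae_eq`). If `J₁` and `J₂` are
blankets, the Doob–Dynkin lemma gives measurable `g₁`, `g₂` with
`P(Y ∈ s | m) = g₁(A, V_{J₁}) = g₂(A, V_{J₂})` a.s. Positivity of the density transfers the second
equality to the product `ν` of the marginal laws.

Under `ν`, replace the coordinates outside `J₁` by an independent copy `x'` of the coordinate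
vector: this preserves the law and leaves `g₁(a, x_{J₁})` unchanged, so `g₁(a, x_{J₁})` equals
`g₂` evaluated at the coordinates of `x` in `J₁ ∩ J₂` and of `x'` in `J₂ ∖ J₁`. By Fubini, `x'` can
be frozen at a suitable value `c`, which exhibits `g₁(a, x_{J₁})` as a function of
`(a, x_{J₁ ∩ J₂})`, `ν`-a.e. (`exists_factor_inter`). By absolute continuity the same holds
for the joint law, so `P(Y ∈ s | m)` is a.s. `m_{J₁ ∩ J₂}`-measurable, hence equal to
`P(Y ∈ s | m_{J₁ ∩ J₂})`.
-/

open MeasureTheory ProbabilityTheory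

open scoped Classical in
/-- Resampling the coordinates outside `J` from an independent copy preserves a product law. -/
lemma measurePreserving_piecewise {I : Type*} [Fintype I] (p : I → Measure ℝ)
    [∀ i, IsProbabilityMeasure (p i)] (J : Set I) :
    MeasurePreserving (fun z : (I → ℝ) × (I → ℝ) => J.piecewise z.1 z.2)
      ((Measure.pi p).prod (Measure.pi p)) (Measure.pi p) := by
  have hm : Measurable (fun z : (I → ℝ) × (I → ℝ) => J.piecewise z.1 z.2) := by
    refine measurable_pi_lambda _ fun i => ?_
    by_cases hi : i ∈ J
    · simp only [Set.piecewise, hi, if_true]; fun_prop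
    · simp only [Set.piecewise, hi, if_false]; fun_prop
  refine ⟨hm, (Measure.pi_eq fun s hs => ?_).symm⟩
  rw [Measure.map_apply hm (MeasurableSet.univ_pi hs)]
  have : (fun z : (I → ℝ) × (I → ℝ) => J.piecewise z.1 z.2) ⁻¹' (Set.univ.pi s) =
      (Set.univ.pi fun i => if i ∈ J then s i else Set.univ) ×ˢ
        (Set.univ.pi fun i => if i ∈ J then Set.univ else s i) := by
    ext z
    simp only [Set.mem_preimage, Set.mem_pi, Set.mem_univ, true_implies, Set.mem_prod,
      ← forall_and]
    refine forall_congr' fun i => ?_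
    by_cases hi : i ∈ J <;> simp [hi]
  rw [this, Measure.prod_prod, Measure.pi_pi, Measure.pi_pi, ← Finset.prod_mul_distrib]
  refine Finset.prod_congr rfl fun i _ => ?_
  by_cases hi : i ∈ J <;> simp [hi]

open scoped Classical in
/-- Under a product law, if a function of the coordinates in `J₁` agrees a.e. with a function of
the coordinates in `J₂`, then it agrees a.e. with a function of those in `J₁ ∩ J₂`. The coordinate
`a` is common to all of them. -/
lemma exists_factor_inter {I : Type*} [Fintype I] (ρ : Measure ℝ) [IsProbabilityMeasure ρ]
    (p : I → Measure ℝ) [∀ i, IsProbabilityMeasure (p i)] (J₁ J₂ : Set I)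
    (g₁ : ℝ × (J₁ → ℝ) → ℝ) (g₂ : ℝ × (J₂ → ℝ) → ℝ) (hg₂ : Measurable g₂)
    (h : ∀ᵐ z ∂(ρ.prod (Measure.pi p)),
      g₁ (z.1, fun j => z.2 j) = g₂ (z.1, fun j => z.2 j)) :
    ∃ k : ℝ × (↥(J₁ ∩ J₂) → ℝ) → ℝ, Measurable k ∧
      ∀ᵐ z ∂(ρ.prod (Measure.pi p)), g₁ (z.1, fun j => z.2 j) = k (z.1, fun j => z.2 j) := by
  have hmp : MeasurePreserving
      (fun w : (I → ℝ) × (ℝ × (I → ℝ)) => (w.2.1, J₁.piecewise w.2.2 w.1))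
      ((Measure.pi p).prod (ρ.prod (Measure.pi p))) (ρ.prod (Measure.pi p)) :=
    (((MeasurePreserving.id ρ).prod (measurePreserving_piecewise p J₁)).comp
      (measurePreserving_prodAssoc ρ (Measure.pi p) (Measure.pi p))).comp
      (Measure.measurePreserving_swap (μ := Measure.pi p) (ν := ρ.prod (Measure.pi p)))
  obtain ⟨c, hc⟩ := (Measure.ae_ae_of_ae_prod (hmp.quasiMeasurePreserving.ae h)).exists
  refine ⟨fun z => g₂ (z.1, fun j => if hj : (j : I) ∈ J₁ then z.2 ⟨j, hj, j.2⟩ else c j),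
    hg₂.comp (measurable_fst.prodMk (measurable_pi_lambda _ fun j => ?_)), ?_⟩
  · by_cases hj : (j : I) ∈ J₁
    · simp only [hj, dite_true]; fun_prop
    · simp only [hj, dite_false]; fun_prop
  · filter_upwards [hc] with z hz
    have e₁ : (fun j : J₁ => J₁.piecewise z.2 c j) = fun j : J₁ => z.2 j := by
      ext j; simp
    have e₂ : (fun j : J₂ => J₁.piecewise z.2 c j) =
        fun j : J₂ => if hj : (j : I) ∈ J₁ then z.2 j else c j := by
      ext j; by_cases hj : (j : I) ∈ J₁ <;> simp [hj]
    simp only [e₁, e₂] at hz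
    exact hz

section CondExp

variable {Ω β β' γ : Type*} [MeasurableSpace β] [MeasurableSpace β'] [MeasurableSpace γ]

lemma integrable_indicator_one {_ : MeasurableSpace Ω} {μ : Measure Ω} [IsProbabilityMeasure μ]
    {t : Set Ω} (ht : MeasurableSet t) :
    Integrable (t.indicator fun _ => (1 : ℝ)) μ :=
  (integrable_const 1).indicator ht

/-- If `X ⊥⊥ Z | W`, then conditioning on `Z` in addition to `W` does not change the conditional
probabilities of `X`. -/
lemma CondIndepFun.condExp_prodMk_ae_eq {mΩ : MeasurableSpace Ω} [StandardBorelSpace Ω]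
    {μ : Measure Ω} [IsProbabilityMeasure μ] {X : Ω → β} {Z : Ω → β'} {W : Ω → γ}
    (hX : Measurable X) (hZ : Measurable Z) (hW : Measurable W)
    (h : CondIndepFun (MeasurableSpace.comap W inferInstance) hW.comap_le X Z μ)
    {s : Set β} (hs : MeasurableSet s) :
    μ⟦X ⁻¹' s | MeasurableSpace.comap (fun ω => (W ω, Z ω)) inferInstance⟧ =ᵐ[μ]
      μ⟦X ⁻¹' s | MeasurableSpace.comap W inferInstance⟧ := by
  rw [condIndepFun_iff_condExp_inter_preimage_eq_mul hX hZ] at h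
  have hWZ : Measurable (fun ω => (W ω, Z ω)) := hW.prodMk hZ
  have hf : Integrable ((X ⁻¹' s).indicator fun _ => (1 : ℝ)) μ := integrable_indicator_one (hX hs)
  set f := (X ⁻¹' s).indicator fun _ => (1 : ℝ) with hfdef
  have hle : MeasurableSpace.comap W inferInstance ≤
      MeasurableSpace.comap (fun ω => (W ω, Z ω)) inferInstance :=
    (MeasurableSpace.comap_prodMk W Z).symm ▸ le_sup_left
  have hg : Integrable (μ[f | MeasurableSpace.comap W inferInstance]) μ := integrable_condExp
  refine (ae_eq_condExp_of_forall_setIntegral_eq hWZ.comap_le hf (fun _ _ _ => hg.integrableOn)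
    ?_ (stronglyMeasurable_condExp.mono hle).aestronglyMeasurable).symm
  rintro _ ⟨t, ht, rfl⟩ -
  -- By the π-λ theorem it suffices to compare the integrals over preimages of rectangles, where
  -- the product formula for `X` and `Z` given `W` applies.
  induction t, ht using MeasurableSpace.induction_on_inter generateFrom_prod.symm
    isPiSystem_prod with
  | empty => simp
  | basic t ht =>
    obtain ⟨a, ha, b, hb, rfl⟩ := ht
    have ha' : MeasurableSet[MeasurableSpace.comap W inferInstance] (W ⁻¹' a) := ⟨a, ha, rfl⟩
    have hb' : MeasurableSet (Z ⁻¹' b) := hZ hb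
    have e : (fun ω => (W ω, Z ω)) ⁻¹' (a ×ˢ b) = W ⁻¹' a ∩ Z ⁻¹' b := rfl
    have hmul : μ[f | MeasurableSpace.comap W inferInstance] *
          (Z ⁻¹' b).indicator (fun _ => (1 : ℝ)) =
        (Z ⁻¹' b).indicator (μ[f | MeasurableSpace.comap W inferInstance]) := by
      ext ω; by_cases hω : ω ∈ Z ⁻¹' b <;> simp [hω, Set.indicator]
    have hfi : (Z ⁻¹' b).indicator f = (X ⁻¹' s ∩ Z ⁻¹' b).indicator fun _ => (1 : ℝ) := by
      rw [hfdef, Set.indicator_indicator, Set.inter_comm]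
    have key : μ[(Z ⁻¹' b).indicator (μ[f | MeasurableSpace.comap W inferInstance]) |
          MeasurableSpace.comap W inferInstance] =ᵐ[μ]
        μ[(Z ⁻¹' b).indicator f | MeasurableSpace.comap W inferInstance] := by
      rw [hfi, ← hmul]
      exact (condExp_mul_of_stronglyMeasurable_left stronglyMeasurable_condExp
        (hmul ▸ hg.indicator hb') (integrable_indicator_one hb')).trans (h s b hs hb).symm
    rw [e, ← setIntegral_indicator hb', ← setIntegral_indicator hb',
      ← setIntegral_condExp hW.comap_le (hg.indicator hb') ha',
      ← setIntegral_condExp hW.comap_le (hf.indicator hb') ha']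
    exact integral_congr_ae (ae_restrict_of_ae key)
  | compl t ht ih =>
    have h1 := integral_add_compl (hWZ ht) hg
    have h2 := integral_add_compl (hWZ ht) hf
    rw [integral_condExp hW.comap_le] at h1
    rw [Set.preimage_compl]
    linarith
  | iUnion t hd ht ih =>
    have hd' : Pairwise (Function.onFun Disjoint fun i => (fun ω => (W ω, Z ω)) ⁻¹' t i) :=
      fun i j hij => (hd hij).preimage _
    rw [Set.preimage_iUnion, integral_iUnion (fun i => hWZ (ht i)) hd' hg.integrableOn,
      integral_iUnion (fun i => hWZ (ht i)) hd' hf.integrableOn]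
    exact tsum_congr ih

/-- If conditioning on a σ-algebra `m ⊇ m' ∨ σ(Z)` yields the same conditional probabilities of
`X` as conditioning on `m'`, then `X ⊥⊥ Z | m'`. -/
lemma condIndepFun_of_condExp_ae_eq {X : Ω → β} {Z : Ω → β'} {m' m mΩ : MeasurableSpace Ω}
    [StandardBorelSpace Ω] {μ : Measure Ω} [IsProbabilityMeasure μ]
    (hX : Measurable X) (hm : m ≤ mΩ) (hle : m' ≤ m) (hZ : Measurable[m] Z)
    (h : ∀ s, MeasurableSet s → μ⟦X ⁻¹' s | m⟧ =ᵐ[μ] μ⟦X ⁻¹' s | m'⟧) :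
    CondIndepFun m' (hle.trans hm) X Z μ := by
  rw [condIndepFun_iff_condExp_inter_preimage_eq_mul hX (hZ.mono hm le_rfl)]
  intro s t hs ht
  have ht' : MeasurableSet (Z ⁻¹' t) := hm _ (hZ ht)
  have hf : Integrable ((X ⁻¹' s).indicator fun _ => (1 : ℝ)) μ := integrable_indicator_one (hX hs)
  have hfi : (X ⁻¹' s ∩ Z ⁻¹' t).indicator (fun _ => (1 : ℝ)) =
      (Z ⁻¹' t).indicator ((X ⁻¹' s).indicator fun _ => (1 : ℝ)) := by
    rw [Set.indicator_indicator, Set.inter_comm]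
  have hmul : μ⟦X ⁻¹' s | m'⟧ * (Z ⁻¹' t).indicator (fun _ => (1 : ℝ)) =
      (Z ⁻¹' t).indicator (μ⟦X ⁻¹' s | m'⟧) := by
    ext ω; by_cases hω : ω ∈ Z ⁻¹' t <;> simp [hω, Set.indicator]
  have h1 : μ⟦X ⁻¹' s ∩ Z ⁻¹' t | m⟧ =ᵐ[μ]
      μ⟦X ⁻¹' s | m'⟧ * (Z ⁻¹' t).indicator (fun _ => (1 : ℝ)) := by
    rw [hfi, hmul]
    refine (condExp_indicator hf (hZ ht)).trans ?_
    filter_upwards [h s hs] with ω hω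
    simp only [Set.indicator, hω]
  refine ((condExp_condExp_of_le hle hm).symm.trans (condExp_congr_ae h1)).trans ?_
  exact condExp_mul_of_stronglyMeasurable_left stronglyMeasurable_condExp
    (hmul ▸ integrable_condExp.indicator ht') (integrable_indicator_one ht')

end CondExp

lemma comap_comp_le {Ω β γ : Type*} [MeasurableSpace β] [MeasurableSpace γ]
    {f : Ω → β} {g : Ω → γ} {Φ : β → γ} (hΦ : Measurable Φ) (h : g = Φ ∘ f) :
    MeasurableSpace.comap g inferInstance ≤ MeasurableSpace.comap f inferInstance := by
  subst h
  rw [← MeasurableSpace.comap_comp]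
  exact MeasurableSpace.comap_mono hΦ.comap_le

open scoped Classical in
/-- For a blanket `J`, conditioning on all of `(A, V)` amounts to conditioning on `(A, V_J)`. -/
lemma IsOutBlanket.condExp_ae_eq {Ω I : Type*} [MeasurableSpace Ω] [StandardBorelSpace Ω]
    {μ : Measure Ω} [IsProbabilityMeasure μ]
    {A Y : Ω → ℝ} {V : I → Ω → ℝ}
    (hA : Measurable A) (hY : Measurable Y) (hV : ∀ i, Measurable (V i))
    {J : Set I} (h : IsOutBlanket μ A Y V J) {s : Set ℝ} (hs : MeasurableSet s) :
    μ⟦Y ⁻¹' s | MeasurableSpace.comap (fun ω => (A ω, fun i => V i ω)) inferInstance⟧ =ᵐ[μ]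
      μ⟦Y ⁻¹' s | MeasurableSpace.comap (fun ω => (A ω, subvec V J ω)) inferInstance⟧ := by
  obtain ⟨_, h⟩ := h
  have hsub : ∀ K : Set I, Measurable (subvec V K) := fun K =>
    measurable_pi_lambda _ fun j => hV j
  have key := CondIndepFun.condExp_prodMk_ae_eq hY (hsub _) (hA.prodMk (hsub J)) h hs
  have e : MeasurableSpace.comap (fun ω => (A ω, fun i => V i ω)) inferInstance =
      MeasurableSpace.comap (fun ω => ((A ω, subvec V J ω), subvec V (Set.univ \ J) ω))
        inferInstance := by
    apply le_antisymm
    · refine comap_comp_le (f := fun ω => ((A ω, subvec V J ω), subvec V (Set.univ \ J) ω))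
        (Φ := fun z => (z.1.1, fun i => if hi : i ∈ J then z.1.2 ⟨i, hi⟩
          else z.2 ⟨i, trivial, hi⟩)) ?_ ?_
      · refine measurable_fst.fst.prodMk (measurable_pi_lambda _ fun i => ?_)
        by_cases hi : i ∈ J
        · simp only [hi, dite_true]; fun_prop
        · simp only [hi, dite_false]; fun_prop
      · funext ω
        simp [subvec]
    · exact comap_comp_le (f := fun ω => (A ω, fun i => V i ω))
        (Φ := fun z => ((z.1, fun j : J => z.2 j), fun j : ↥(Set.univ \ J) => z.2 j))
        (by fun_prop) rfl
  rw [e]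
  exact key

/-- the collection of outcome Markov blankets `𝔯_{Y|A}(V)` is closed under
intersection, assuming the joint law of `(A, (V_i)_{i ∈ I})` has an a.e. positive density
with respect to the product of its one-dimensional marginal laws. -/
theorem outBlanket_inter_closed
    {Ω I : Type*} [MeasurableSpace Ω] [StandardBorelSpace Ω] [Fintype I]
    (μ : Measure Ω) [IsProbabilityMeasure μ]
    (A Y : Ω → ℝ) (V : I → Ω → ℝ)
    (hA : Measurable A) (hY : Measurable Y) (hV : ∀ i, Measurable (V i))
    (hpos : PositivePairDensity μ A V)
    (J₁ J₂ : Set I)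
    (h₁ : IsOutBlanket μ A Y V J₁) (h₂ : IsOutBlanket μ A Y V J₂) :
    IsOutBlanket μ A Y V (J₁ ∩ J₂) := by
  have hsub : ∀ K : Set I, Measurable (subvec V K) := fun K =>
    measurable_pi_lambda _ fun j => hV j
  have hAV : Measurable (fun ω => (A ω, fun i => V i ω)) :=
    hA.prodMk (measurable_pi_lambda _ hV)
  have hAJ : ∀ K : Set I, Measurable (fun ω => (A ω, subvec V K ω)) := fun K =>
    hA.prodMk (hsub K)
  have : IsProbabilityMeasure (μ.map A) := Measure.isProbabilityMeasure_map hA.aemeasurable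
  have : ∀ i, IsProbabilityMeasure (μ.map (V i)) := fun i =>
    Measure.isProbabilityMeasure_map (hV i).aemeasurable
  obtain ⟨hac, hdens⟩ := hpos
  set P := μ.map (fun ω => (A ω, fun i => V i ω)) with hP
  set ν := (μ.map A).prod (Measure.pi fun i => μ.map (V i)) with hν
  -- A positive density makes the joint law and the product law mutually absolutely continuous.
  have hca : ν ≪ P := by
    rw [← Measure.withDensity_rnDeriv_eq P ν hac]
    exact withDensity_absolutelyContinuous' (Measure.measurable_rnDeriv _ _).aemeasurable
      (hdens.mono fun x hx => hx.ne')
  have hproj : ∀ K : Set I, Measurable (fun z : ℝ × (I → ℝ) => (z.1, fun j : K => z.2 j)) :=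
    fun K => by fun_prop
  have hle : ∀ K : Set I, MeasurableSpace.comap (fun ω => (A ω, subvec V K ω)) inferInstance ≤
      MeasurableSpace.comap (fun ω => (A ω, fun i => V i ω)) inferInstance := fun K =>
    comap_comp_le (hproj K) rfl
  have hmV : ∀ K : Set I,
      Measurable[MeasurableSpace.comap (fun ω => (A ω, fun i => V i ω)) inferInstance]
        (subvec V K) := fun K =>
    (measurable_snd.comp (hproj K)).comp (comap_measurable _)
  refine ⟨(hAJ _).comap_le,
    condIndepFun_of_condExp_ae_eq hY hAV.comap_le (hle _) (hmV _) fun s hs => ?_⟩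
  have c₁ := h₁.condExp_ae_eq hA hY hV hs
  have c₂ := h₂.condExp_ae_eq hA hY hV hs
  obtain ⟨g₁, hg₁, e₁⟩ := StronglyMeasurable.exists_eq_measurable_comp
    (stronglyMeasurable_condExp (μ := μ) (f := (Y ⁻¹' s).indicator fun _ => (1 : ℝ))
      (m := MeasurableSpace.comap (fun ω => (A ω, subvec V J₁ ω)) inferInstance))
  obtain ⟨g₂, hg₂, e₂⟩ := StronglyMeasurable.exists_eq_measurable_comp
    (stronglyMeasurable_condExp (μ := μ) (f := (Y ⁻¹' s).indicator fun _ => (1 : ℝ))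
      (m := MeasurableSpace.comap (fun ω => (A ω, subvec V J₂ ω)) inferInstance))
  rw [e₁] at c₁
  rw [e₂] at c₂
  have hagree : ∀ᵐ z ∂P, g₁ (z.1, fun j => z.2 j) = g₂ (z.1, fun j => z.2 j) := by
    refine (ae_map_iff hAV.aemeasurable (measurableSet_eq_fun
      (hg₁.measurable.comp (hproj J₁)) (hg₂.measurable.comp (hproj J₂)))).2 ?_
    exact c₁.symm.trans c₂
  obtain ⟨k, hk, hk_eq⟩ := exists_factor_inter (μ.map A) (fun i => μ.map (V i)) J₁ J₂ g₁ g₂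
    hg₂.measurable (hca.ae_le hagree)
  have hkΩ : g₁ ∘ (fun ω => (A ω, subvec V J₁ ω)) =ᵐ[μ]
      k ∘ fun ω => (A ω, subvec V (J₁ ∩ J₂) ω) :=
    ae_of_ae_map hAV.aemeasurable (hac.ae_le hk_eq)
  -- The conditional probability given `(A, V)` has an `(A, V_{J₁ ∩ J₂})`-measurable version, so
  -- conditioning it further on `(A, V_{J₁ ∩ J₂})` leaves it unchanged.
  have c := c₁.trans hkΩ
  have hint : Integrable (k ∘ fun ω => (A ω, subvec V (J₁ ∩ J₂) ω)) μ :=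
    integrable_condExp.congr c
  have hfix := condExp_of_stronglyMeasurable (hAJ (J₁ ∩ J₂)).comap_le
    (hk.comp (comap_measurable _)).stronglyMeasurable hint
  have htower := (condExp_condExp_of_le (μ := μ) (f := (Y ⁻¹' s).indicator fun _ => (1 : ℝ))
    (hle (J₁ ∩ J₂)) hAV.comap_le).symm.trans (condExp_congr_ae c)
  rw [hfix] at htower
  exact c.trans htower.symm
end

section
/- (Soundness of outcome Markov blankets.) Let A be a binary treatment with potential outcomes Y_0, Y_1, let the observed outcome Y satisfy consistency, and let V = (V_i)_{i ∈ I} be a finite family of covariates such that V_I controls for confounding (Y_a ⊥⊥ A | V_I for a = 0, 1) and the joint law of (A, (V_i)_{i ∈ I}) is absolutely continuous with respect to P_A ⊗ ⨂_{i ∈ I} P_{V_i} with a density that is positive almost everywhere. Then every outcome Markov blanket controls for confounding: for every J ∈ 𝔯_{Y|A}(V) and a = 0, 1, Y_a ⊥⊥ A | V_J. -/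
/-!
Fix an arm `a`, put `E = {A = a}` and let `e = P(E | V_I)` be the propensity of that arm.

If `P(E) = 0`, then `A` is almost surely constant and there is nothing to prove. Otherwise
positivity of the joint density forces `e > 0` almost surely (`propensity_pos`).

For a Borel set `s`, the blanket property says that `P(Y ∈ s | A, V_I)` is a version of
`P(Y ∈ s | A, V_J)`; hence on `E` it equals a function `g` of `V_J` alone
(`IsOutBlanket.exists_condExp_eq_on`). By consistency `Y = Y_a` on `E`, so conditioning on `V_I`
and using `Y_a ⊥⊥ A | V_I` gives `P(Y_a ∈ s | V_I) * e = g * e`, and dividing by `e` shows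
`P(Y_a ∈ s | V_I) = g`. As `g` is already a function of `V_J`, the tower property turns the
factorization over `V_I` into one over `V_J` (`condExp_inter_eq_mul`).
-/

open MeasureTheory ProbabilityTheory

/-- If `e = P(E | V_I)` vanished on an event `{V_I ∈ B}`, then `{A = a} ∩ {V_I ∈ B}` would be null;
by positivity of the density `{a} × B` would be null for the product of the marginals, so `B` would
be null for `⨂ P_{V_i}`, and by absolute continuity `{V_I ∈ B}` would be null. -/
lemma propensity_pos {Ω I : Type*} [mΩ : MeasurableSpace Ω] [Fintype I]
    (μ : Measure Ω) [IsProbabilityMeasure μ] (A : Ω → ℝ) (V : I → Ω → ℝ)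
    (hA : Measurable A) (hV : ∀ i, Measurable (V i)) (hpos : PositivePairDensity μ A V)
    (a : ℝ) (ha : μ (A ⁻¹' {a}) ≠ 0) :
    ∀ᵐ ω ∂μ, 0 < (μ⟦A ⁻¹' {a} | MeasurableSpace.comap (subvec V Set.univ) inferInstance⟧) ω := by
  obtain ⟨hac, hden⟩ := hpos
  have hE : MeasurableSet (A ⁻¹' {a}) := hA (measurableSet_singleton a)
  have hVm : Measurable (fun ω i => V i ω) := measurable_pi_lambda _ hV
  have hWm : Measurable (subvec V Set.univ) := measurable_pi_lambda _ fun j => hV j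
  have hHle : MeasurableSpace.comap (subvec V Set.univ) inferInstance ≤ mΩ := hWm.comap_le
  set e := μ⟦A ⁻¹' {a} | MeasurableSpace.comap (subvec V Set.univ) inferInstance⟧ with he
  have heint : Integrable ((A ⁻¹' {a}).indicator fun _ => (1 : ℝ)) μ :=
    (integrable_const _).indicator hE
  have hZ : MeasurableSet[MeasurableSpace.comap (subvec V Set.univ) inferInstance]
      {ω | e ω ≤ 0} :=
    (stronglyMeasurable_condExp (μ := μ)
      (f := (A ⁻¹' {a}).indicator fun _ => (1 : ℝ))).measurable measurableSet_Iic
  have hnn : 0 ≤ᵐ[μ] e := condExp_nonneg (ae_of_all _ fun ω => by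
    by_cases h : ω ∈ A ⁻¹' {a} <;> simp [Set.indicator, h])
  have hnull : μ (A ⁻¹' {a} ∩ {ω | e ω ≤ 0}) = 0 := by
    have h1 : ∫ ω in {ω | e ω ≤ 0}, e ω ∂μ
        = ∫ ω in {ω | e ω ≤ 0}, (A ⁻¹' {a}).indicator (fun _ => (1 : ℝ)) ω ∂μ :=
      setIntegral_condExp hHle heint hZ
    have h2 : ∫ ω in {ω | e ω ≤ 0}, e ω ∂μ = 0 := by
      rw [setIntegral_congr_ae (g := fun _ => (0 : ℝ)) (hHle _ hZ)]
      · simp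
      · filter_upwards [hnn] with ω h0 h1 using le_antisymm h1 h0
    rw [h2, integral_indicator hE] at h1
    rw [Measure.restrict_restrict hE] at h1
    simp only [integral_const, smul_eq_mul, mul_one] at h1
    have h3 := h1.symm
    simpa [measureReal_def, ENNReal.toReal_eq_zero_iff] using h3
  obtain ⟨B, hB, hBZ⟩ := hZ
  -- `subvec V Set.univ` is indexed by the subtype `↥Set.univ`; `r` reindexes from `I`.
  let r : (I → ℝ) → (↥(Set.univ : Set I) → ℝ) := fun x j => x j
  have hr : Measurable r := measurable_pi_lambda _ fun j => measurable_pi_apply _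
  have hpre : (fun ω i => V i ω) ⁻¹' (r ⁻¹' B) = {ω | e ω ≤ 0} := by
    rw [← hBZ]; rfl
  have hB' : MeasurableSet (r ⁻¹' B) := hr hB
  have hP : ∀ i, IsProbabilityMeasure (μ.map (V i)) := fun i =>
    Measure.isProbabilityMeasure_map (hV i).aemeasurable
  have hPA : IsProbabilityMeasure (μ.map A) := Measure.isProbabilityMeasure_map hA.aemeasurable
  have hac' : (μ.map A).prod (Measure.pi fun i => μ.map (V i)) ≪
      μ.map (fun ω => (A ω, fun i => V i ω)) := by
    have : SigmaFinite (μ.map fun ω => (A ω, fun i => V i ω)) := by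
      have := Measure.isFiniteMeasure_map μ (fun ω => (A ω, fun i => V i ω))
      infer_instance
    have h := withDensity_absolutelyContinuous'
      (μ := (μ.map A).prod (Measure.pi fun i => μ.map (V i)))
      (Measure.measurable_rnDeriv (μ.map (fun ω => (A ω, fun i => V i ω))) _).aemeasurable
      (hden.mono fun x hx => hx.ne')
    rwa [Measure.withDensity_rnDeriv_eq _ _ hac] at h
  have hprod : ((μ.map A).prod (Measure.pi fun i => μ.map (V i))) ({a} ×ˢ (r ⁻¹' B)) = 0 := by
    apply hac'
    rw [Measure.map_apply (hA.prodMk hVm) ((measurableSet_singleton a).prod hB')]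
    rw [← hnull, ← hpre]
    rfl
  rw [Measure.prod_prod, Measure.map_apply hA (measurableSet_singleton a), mul_eq_zero] at hprod
  have hpi := hprod.resolve_left ha
  have hZ0 : μ {ω | e ω ≤ 0} = 0 := by
    have h := hac (s := Set.univ ×ˢ (r ⁻¹' B)) (by rw [Measure.prod_prod, hpi, mul_zero])
    rw [Measure.map_apply (hA.prodMk hVm) (MeasurableSet.univ.prod hB')] at h
    rw [← hpre, ← h]
    congr 1
    ext ω
    simp
  rw [ae_iff]
  simpa using hZ0

/-- On `{A = a}`, the conditional probability `P(Y ∈ s | A, V_J, V_{I∖J})` agrees with a bounded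
function of `V_J`, namely `P(Y ∈ s | A, V_J)` with `A` frozen at `a`. -/
lemma IsOutBlanket.exists_condExp_eq_on {Ω I : Type*} [MeasurableSpace Ω]
    [StandardBorelSpace Ω] [Fintype I] {μ : Measure Ω} [IsProbabilityMeasure μ]
    {A Y : Ω → ℝ} {V : I → Ω → ℝ} {J : Set I}
    (hA : Measurable A) (hY : Measurable Y) (hV : ∀ i, Measurable (V i))
    (h : IsOutBlanket μ A Y V J) (a : ℝ) {s : Set ℝ} (hs : MeasurableSet s) :
    ∃ g : Ω → ℝ, StronglyMeasurable[MeasurableSpace.comap (subvec V J) inferInstance] g ∧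
      (∀ ω, ‖g ω‖ ≤ 1) ∧
      ∀ᵐ ω ∂μ, A ω = a →
        (μ⟦Y ⁻¹' s | MeasurableSpace.comap
          (fun ω => ((A ω, subvec V J ω), subvec V (Set.univ \ J) ω)) inferInstance⟧) ω = g ω := by
  have hsub : ∀ K : Set I, Measurable (subvec V K) := fun K =>
    measurable_pi_lambda _ fun j => hV j
  have hk : Measurable (fun ω => (A ω, subvec V J ω)) := hA.prodMk (hsub J)
  obtain ⟨hle, hci⟩ := h
  have hae := (condIndepFun_iff_condDistrib_prod_ae_eq_prodMkRight (μ := μ) hY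
    (hsub (Set.univ \ J)) hk).1 hci.symm
  have hae' := ae_of_ae_map (hk.prodMk (hsub (Set.univ \ J))).aemeasurable hae
  have hce := condDistrib_ae_eq_condExp (μ := μ) (hk.prodMk (hsub (Set.univ \ J))) hY hs
  refine ⟨fun ω => (condDistrib Y (fun ω => (A ω, subvec V J ω)) μ (a, subvec V J ω)).real s,
    ?_, ?_, ?_⟩
  · apply Measurable.stronglyMeasurable
    have h1 : Measurable fun w : J → ℝ =>
        (condDistrib Y (fun ω => (A ω, subvec V J ω)) μ (a, w)).real s :=
      ((Kernel.measurable_coe _ hs).comp (measurable_const.prodMk measurable_id)).ennreal_toReal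
    exact h1.comp (comap_measurable _)
  · intro ω
    rw [Real.norm_of_nonneg measureReal_nonneg]
    exact measureReal_le_one
  · filter_upwards [hae', hce] with ω h1 h2 hAω
    rw [← h2, h1, Kernel.prodMkRight_apply, hAω]

/-- Descent of a factorization from `H` to a smaller σ-algebra `G`. Here `F` is the event
`{Y_a ∈ s}`, `F'` is `{Y ∈ s}`, `E` is `{A = a}`, and `K` carries both `A` and `V_I`. -/
lemma condExp_inter_eq_mul {Ω : Type*} {G H K mΩ : MeasurableSpace Ω} {μ : Measure Ω}
    [IsProbabilityMeasure μ] (hGH : G ≤ H) (hHK : H ≤ K) (hK : K ≤ mΩ)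
    {F F' E : Set Ω} (hF : MeasurableSet F) (hF' : MeasurableSet F') (hE : MeasurableSet[K] E)
    {g : Ω → ℝ} (hg : StronglyMeasurable[G] g) (hgb : ∀ ω, ‖g ω‖ ≤ 1)
    (hci : μ⟦F ∩ E | H⟧ =ᵐ[μ] μ⟦F | H⟧ * μ⟦E | H⟧)
    (hcons : ∀ᵐ ω ∂μ, ω ∈ E → (ω ∈ F' ↔ ω ∈ F))
    (hbl : ∀ᵐ ω ∂μ, ω ∈ E → (μ⟦F' | K⟧) ω = g ω)
    (hpos : ∀ᵐ ω ∂μ, 0 < (μ⟦E | H⟧) ω) :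
    μ⟦F ∩ E | G⟧ =ᵐ[μ] μ⟦F | G⟧ * μ⟦E | G⟧ := by
  have hH : H ≤ mΩ := hHK.trans hK
  have hG : G ≤ mΩ := hGH.trans hH
  have iF : Integrable (F.indicator fun _ => (1 : ℝ)) μ := (integrable_const _).indicator hF
  have iF' : Integrable (F'.indicator fun _ => (1 : ℝ)) μ := (integrable_const _).indicator hF'
  have iE : Integrable (E.indicator fun _ => (1 : ℝ)) μ := (integrable_const _).indicator (hK _ hE)
  have igE : Integrable (g * E.indicator fun _ => (1 : ℝ)) μ :=
    iE.bdd_mul (hg.mono hG).aestronglyMeasurable (ae_of_all _ hgb)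
  have ig : Integrable g μ :=
    (integrable_const (1 : ℝ)).mono' (hg.mono hG).aestronglyMeasurable (ae_of_all _ hgb)
  have h1 : μ⟦F ∩ E | K⟧ =ᵐ[μ] g * E.indicator fun _ => (1 : ℝ) := by
    have e1 : ((F ∩ E).indicator fun _ => (1 : ℝ)) =ᵐ[μ]
        E.indicator (F'.indicator fun _ => (1 : ℝ)) := by
      filter_upwards [hcons] with ω h
      by_cases hω : ω ∈ E
      · have := h hω
        by_cases hωF : ω ∈ F <;> simp [Set.indicator, hω, hωF, this]
      · simp [Set.indicator, hω]
    refine (condExp_congr_ae e1).trans ((condExp_indicator iF' hE).trans ?_)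
    filter_upwards [hbl] with ω h
    by_cases hω : ω ∈ E
    · simp [Set.indicator, hω, h hω]
    · simp [Set.indicator, hω]
  have h2 : μ⟦F ∩ E | H⟧ =ᵐ[μ] g * μ⟦E | H⟧ :=
    (condExp_condExp_of_le hHK hK).symm.trans ((condExp_congr_ae h1).trans
      (condExp_mul_of_stronglyMeasurable_left (hg.mono hGH) igE iE))
  have h3 : μ⟦F | H⟧ =ᵐ[μ] g := by
    filter_upwards [hci, h2, hpos] with ω a1 a2 a3
    exact mul_right_cancel₀ a3.ne' (a1.symm.trans a2)
  have h4 : μ⟦F | G⟧ =ᵐ[μ] g :=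
    (condExp_condExp_of_le hGH hH).symm.trans ((condExp_congr_ae h3).trans
      (condExp_of_stronglyMeasurable hG hg ig).eventuallyEq)
  have h5 : μ⟦F ∩ E | G⟧ =ᵐ[μ] g * μ⟦E | G⟧ :=
    (condExp_condExp_of_le (hGH.trans hHK) hK).symm.trans ((condExp_congr_ae h1).trans
      (condExp_mul_of_stronglyMeasurable_left hg igE iE))
  filter_upwards [h4, h5] with ω a1 a2
  rw [a2, Pi.mul_apply, Pi.mul_apply, a1]

/-- The claim for the single potential outcome `Y_a`, where `b` is the other arm. -/
lemma IsOutBlanket.condIndepGiven_arm {Ω I : Type*} [mΩ : MeasurableSpace Ω]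
    [StandardBorelSpace Ω] [Fintype I] {μ : Measure Ω} [IsProbabilityMeasure μ]
    {A Y Ya : Ω → ℝ} {V : I → Ω → ℝ} {J : Set I}
    (hA : Measurable A) (hY : Measurable Y) (hYa : Measurable Ya) (hV : ∀ i, Measurable (V i))
    {a b : ℝ} (hbin : ∀ ω, A ω = a ∨ A ω = b)
    (hcons : ∀ᵐ ω ∂μ, A ω = a → Y ω = Ya ω)
    (hS : CondIndepGiven μ Ya A (subvec V Set.univ))
    (hpos : PositivePairDensity μ A V) (h : IsOutBlanket μ A Y V J) :
    CondIndepGiven μ Ya A (subvec V J) := by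
  have hsub : ∀ K : Set I, Measurable (subvec V K) := fun K =>
    measurable_pi_lambda _ fun j => hV j
  have hE : MeasurableSet (A ⁻¹' {a}) := hA (measurableSet_singleton a)
  refine ⟨(hsub J).comap_le, ?_⟩
  rw [condIndepFun_iff_condIndep, condIndep_iff_forall_condIndepSet]
  rintro _ t ⟨s, hs, rfl⟩ ht
  -- Since `A` has two values, `{A = a}` generates `σ(A)`.
  have ht' : MeasurableSet[MeasurableSpace.generateFrom {A ⁻¹' {a}}] t := by
    obtain ⟨u, -, rfl⟩ := ht
    rw [MeasureTheory.measurableSet_generateFrom_singleton_iff]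
    by_cases hau : a ∈ u <;> by_cases hbu : b ∈ u
    · refine Or.inr (Or.inr (Or.inr ?_))
      ext ω; rcases hbin ω with h | h <;> simp [h, hau, hbu]
    · refine Or.inr (Or.inl ?_)
      ext ω; rcases hbin ω with h | h <;> simp [h, hau, hbu]
      rintro rfl; exact hbu hau
    · refine Or.inr (Or.inr (Or.inl ?_))
      ext ω; rcases hbin ω with h | h <;> simp [h, hau, hbu]
      rintro rfl; exact hau hbu
    · refine Or.inl ?_
      ext ω; rcases hbin ω with h | h <;> simp [h, hau, hbu]
  suffices hset : CondIndepSet _ (hsub J).comap_le (Ya ⁻¹' s) (A ⁻¹' {a}) μ by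
    exact CondIndep.condIndepSet_of_measurableSet
      ((condIndepSet_iff_condIndep _ _ _ _ _).1 hset)
      (MeasurableSpace.measurableSet_generateFrom rfl) ht'
  rw [condIndepSet_iff _ _ _ _ (hYa hs) hE]
  by_cases h0 : μ (A ⁻¹' {a}) = 0
  · -- Both sides vanish when the arm `a` is never observed.
    have hnot : ∀ᵐ ω ∂μ, ω ∉ A ⁻¹' {a} := measure_eq_zero_iff_ae_notMem.1 h0
    have z : ∀ S ⊆ A ⁻¹' {a}, μ⟦S | MeasurableSpace.comap (subvec V J) inferInstance⟧ =ᵐ[μ] 0 := by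
      intro S hSE
      have : (S.indicator fun _ => (1 : ℝ)) =ᵐ[μ] 0 := by
        filter_upwards [hnot] with ω hω
        exact Set.indicator_of_notMem (fun hh => hω (hSE hh)) _
      refine (condExp_congr_ae this).trans ?_
      rw [condExp_zero]
    filter_upwards [z _ Set.inter_subset_right, z _ subset_rfl] with ω h1 h2
    rw [h1, Pi.mul_apply, h2]; simp
  · obtain ⟨g, hg, hgb, hbl⟩ := h.exists_condExp_eq_on hA hY hV a hs
    obtain ⟨hle, hci⟩ := hS
    have hKm : Measurable (fun ω => ((A ω, subvec V J ω), subvec V (Set.univ \ J) ω)) :=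
      (hA.prodMk (hsub J)).prodMk (hsub _)
    refine condExp_inter_eq_mul (H := MeasurableSpace.comap (subvec V Set.univ) inferInstance)
      (K := MeasurableSpace.comap
        (fun ω => ((A ω, subvec V J ω), subvec V (Set.univ \ J) ω)) inferInstance)
      ?_ ?_ hKm.comap_le (hYa hs) (hY hs) ?_ hg hgb ?_ ?_ hbl
      (propensity_pos μ A V hA hV hpos a h0)
    · have hr : Measurable fun (x : ↥(Set.univ : Set I) → ℝ) (j : J) => x ⟨j, trivial⟩ :=
        measurable_pi_lambda _ fun j => measurable_pi_apply _
      exact (hr.comp (comap_measurable (subvec V Set.univ))).comap_le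
    · refine Measurable.comap_le ?_
      have hm := comap_measurable (m := inferInstance)
        (fun ω => ((A ω, subvec V J ω), subvec V (Set.univ \ J) ω))
      refine @measurable_pi_lambda _ _ _ (_) _ _ fun j => ?_
      by_cases hj : (j : I) ∈ J
      · exact (measurable_pi_apply (⟨j, hj⟩ : J)).comp (measurable_snd.comp (measurable_fst.comp hm))
      · exact (measurable_pi_apply (⟨j, trivial, hj⟩ : ↥(Set.univ \ J))).comp
          (measurable_snd.comp hm)
    · exact (measurable_fst.comp (measurable_fst.comp (comap_measurable
        (fun ω => ((A ω, subvec V J ω), subvec V (Set.univ \ J) ω))))) (measurableSet_singleton a)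
    · exact (condIndepFun_iff_condExp_inter_preimage_eq_mul hYa hA).1 hci s {a} hs
        (measurableSet_singleton a)
    · filter_upwards [hcons] with ω hω hωE
      simp [hω hωE]

/-- Soundness of outcome Markov blankets: if the full family `V_I` controls for
confounding and the joint law of `(A, (V_i)_{i ∈ I})` has an a.e. positive density with
respect to the product of its one-dimensional marginal laws, then every outcome Markov
blanket `J ∈ 𝔯_{Y|A}(V)` controls for confounding: `Y_a ⊥⊥ A | V_J` for `a = 0, 1`. -/
theorem outBlanket_sound
    {Ω I : Type*} [MeasurableSpace Ω] [StandardBorelSpace Ω] [Fintype I]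
    (μ : Measure Ω) [IsProbabilityMeasure μ]
    (A Y Y0 Y1 : Ω → ℝ) (V : I → Ω → ℝ)
    (hA : Measurable A) (hY : Measurable Y) (hY0 : Measurable Y0) (hY1 : Measurable Y1)
    (hV : ∀ i, Measurable (V i))
    (hbin : IsBinary A)
    (hcons : Consistency μ A Y Y0 Y1)
    (hS : ControlsConfounding μ A Y0 Y1 (subvec V Set.univ))
    (hpos : PositivePairDensity μ A V) :
    ∀ J : Set I, IsOutBlanket μ A Y V J → ControlsConfounding μ A Y0 Y1 (subvec V J) := by
  intro J hJ
  exact ⟨hJ.condIndepGiven_arm hA hY hY0 hV hbin hcons.2 hS.1 hpos,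
    hJ.condIndepGiven_arm hA hY hY1 hV (fun ω => (hbin ω).symm) hcons.1 hS.2 hpos⟩
end
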